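/- Let P be a probability measure on Z, let π be a prior probability measure on Θ, and let d > 0, κ ≥ 1 satisfy the prior mass condition π({θ ∈ Θ : R_P(θ) − R_P* ≤ s}) ≥ s^d/κ for all s ∈ (0,1]. Assume C²d ≤ 8n and set α = 2√(2d)/(√n · C). Then E_S E_{θ∼ρ_S(π,α)}[R_P(θ)] ≤ R_P* + (C/2)√(d/(2n)) · ( (1/2) log(8 e⁴ n/(d C²)) + (1/d) log κ ), where E_S denotes expectation over the i.i.d. n-sample S from P. -/

import Mathlib

open MeasureTheory ProbabilityTheory
open scoped Classical

noncomputable section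

/-- Kullback–Leibler divergence of `ρ` with respect to `π`. -/
def klDiv {Ω : Type*} [MeasurableSpace Ω] (ρ π : Measure Ω) : ENNReal :=
  if ρ ≪ π ∧ Integrable (llr ρ π) ρ then ENNReal.ofReal (∫ x, llr ρ π x ∂ρ) else ⊤

/-- The prediction risk `R_P(θ) = E_{Z∼P}[ℓ(Z,θ)]`. -/
def risk {Z Θ : Type*} [MeasurableSpace Z] (ℓ : Z → Θ → ℝ) (P : Measure Z) (θ : Θ) : ℝ :=
  ∫ z, ℓ z θ ∂P

/-- The optimal risk `R_P* = inf_θ R_P(θ)`. -/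
def optRisk {Z Θ : Type*} [MeasurableSpace Z] (ℓ : Z → Θ → ℝ) (P : Measure Z) : ℝ :=
  ⨅ θ, risk ℓ P θ

/-- The empirical risk `R̂_S(θ) = (1/n) ∑ᵢ ℓ(Zᵢ,θ)`. -/
def empRisk {Z Θ : Type*} {n : ℕ} (ℓ : Z → Θ → ℝ) (S : Fin n → Z) (θ : Θ) : ℝ :=
  (∑ i, ℓ (S i) θ) / n

/-- The PAC-Bayes risk estimate `R̂_S(ρ,π,α) = E_{θ∼ρ}[R̂_S(θ)] + KL(ρ∥π)/(αn)`. -/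
def riskEstimate {Z Θ : Type*} [MeasurableSpace Θ] {n : ℕ} (ℓ : Z → Θ → ℝ) (S : Fin n → Z)
    (ρ π : Measure Θ) (α : ℝ) : ℝ :=
  (∫ θ, empRisk ℓ S θ ∂ρ) + (klDiv ρ π).toReal / (α * n)


/-- The Gibbs posterior `ρ_S(π,α)`, with density proportional to
`exp(−αn R̂_S)` with respect to the prior `π`. -/
def gibbs {Z Θ : Type*} [MeasurableSpace Θ] {n : ℕ} (ℓ : Z → Θ → ℝ) (π : Measure Θ)
    (α : ℝ) (S : Fin n → Z) : Measure Θ :=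
  π.withDensity fun θ => ENNReal.ofReal
    (Real.exp (-(α * n) * empRisk ℓ S θ) / ∫ ϑ, Real.exp (-(α * n) * empRisk ℓ S ϑ) ∂π)

/-- Jensen's inequality for the logarithm of the exponential moment. -/
theorem integral_le_log_integral_exp {Ω : Type*} [MeasurableSpace Ω] {μ : Measure Ω}
    [IsProbabilityMeasure μ] {f : Ω → ℝ} (hf : Integrable f μ)
    (hexp : Integrable (fun x => Real.exp (f x)) μ) :
    ∫ x, f x ∂μ ≤ Real.log (∫ x, Real.exp (f x) ∂μ) := by
  rw [Real.le_log_iff_exp_le (integral_exp_pos hexp)]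
  exact convexOn_exp.map_integral_le Real.continuous_exp.continuousOn isClosed_univ
    (Filter.Eventually.of_forall fun _ => Set.mem_univ _) hf hexp

/-- Variational upper bound for the mean of `g` under the tilted measure `μ.tilted f`. -/
theorem integral_tilted_le_log_sub_log {Ω : Type*} [MeasurableSpace Ω] {μ : Measure Ω}
    [IsProbabilityMeasure μ] {f g : Ω → ℝ} (hf : Integrable (fun x => Real.exp (f x)) μ)
    (hg : Measurable g) {K : ℝ} (hgK : ∀ x, |g x| ≤ K)
    (hfg : Integrable (fun x => Real.exp (f x + g x)) μ) :
    ∫ x, g x ∂(μ.tilted f) ≤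
      Real.log (∫ x, Real.exp (f x + g x) ∂μ) - Real.log (∫ x, Real.exp (f x) ∂μ) := by
  have := isProbabilityMeasure_tilted hf
  have hgi : Integrable g (μ.tilted f) :=
    .of_bound hg.aestronglyMeasurable K (Filter.Eventually.of_forall hgK)
  have hge : Integrable (fun x => Real.exp (g x)) (μ.tilted f) := by
    refine .of_bound hg.exp.aestronglyMeasurable (Real.exp K)
      (Filter.Eventually.of_forall fun x => ?_)
    rw [Real.norm_eq_abs, Real.abs_exp]
    exact Real.exp_le_exp.2 ((le_abs_self _).trans (hgK x))
  refine (integral_le_log_integral_exp hgi hge).trans_eq ?_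
  rw [integral_exp_tilted, Real.log_div]
  · rfl
  · exact (integral_exp_pos hfg).ne'
  · exact (integral_exp_pos hf).ne'

/-- Lower bound for a log-partition function through the conditioning on an event. -/
theorem log_measure_add_integral_cond_le {Ω : Type*} [MeasurableSpace Ω] {μ : Measure Ω}
    [IsProbabilityMeasure μ] {f : Ω → ℝ} {B : Set Ω} (hμB : 0 < μ.real B)
    (hf : Integrable f μ) (hexp : Integrable (fun x => Real.exp (f x)) μ) :
    Real.log (μ.real B) + ∫ x, f x ∂μ[|B] ≤ Real.log (∫ x, Real.exp (f x) ∂μ) := by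
  have hB : μ B ≠ 0 := fun h => by simp [Measure.real, h] at hμB
  have := cond_isProbabilityMeasure hB
  have hc : (μ B)⁻¹ ≠ ⊤ := ENNReal.inv_ne_top.2 hB
  have hexp' : Integrable (fun x => Real.exp (f x)) μ[|B] :=
    hexp.restrict.smul_measure hc
  have hf' : Integrable f μ[|B] := hf.restrict.smul_measure hc
  have hJ := integral_le_log_integral_exp hf' hexp'
  have hle : μ.real B * ∫ x, Real.exp (f x) ∂μ[|B] ≤ ∫ x, Real.exp (f x) ∂μ := by
    have : ∫ x, Real.exp (f x) ∂μ[|B] = (μ.real B)⁻¹ * ∫ x in B, Real.exp (f x) ∂μ := by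
      rw [ProbabilityTheory.cond, integral_smul_measure, ENNReal.toReal_inv, smul_eq_mul,
        Measure.real]
    rw [this, mul_inv_cancel_left₀ hμB.ne']
    exact setIntegral_le_integral hexp (Filter.Eventually.of_forall fun x => (Real.exp_pos _).le)
  have hpos := integral_exp_pos hexp'
  calc _ ≤ Real.log (μ.real B) + Real.log (∫ x, Real.exp (f x) ∂μ[|B]) := by gcongr
    _ = Real.log (μ.real B * ∫ x, Real.exp (f x) ∂μ[|B]) :=
      (Real.log_mul hμB.ne' hpos.ne').symm
    _ ≤ _ := Real.log_le_log (mul_pos hμB hpos) hle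

theorem risk_mem_Icc {Z Θ : Type*} [MeasurableSpace Z] {ℓ : Z → Θ → ℝ} {C : ℝ} {P : Measure Z}
    [IsProbabilityMeasure P] (hℓ : ∀ z θ, ℓ z θ ∈ Set.Icc 0 C) (θ : Θ) : risk ℓ P θ ∈ Set.Icc 0 C := by
  refine ⟨integral_nonneg fun z => (hℓ z θ).1, ?_⟩
  refine (integral_mono_of_nonneg (Filter.Eventually.of_forall fun z => (hℓ z θ).1)
    (integrable_const C) (Filter.Eventually.of_forall fun z => (hℓ z θ).2)).trans_eq ?_
  simp

theorem empRisk_mem_Icc {Z Θ : Type*} {ℓ : Z → Θ → ℝ} {C : ℝ} {n : ℕ} (hn : 0 < n)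
    (hℓ : ∀ z θ, ℓ z θ ∈ Set.Icc 0 C) (S : Fin n → Z) (θ : Θ) :
    empRisk ℓ S θ ∈ Set.Icc 0 C := by
  have hn' : (0 : ℝ) < n := by exact_mod_cast hn
  refine ⟨div_nonneg (Finset.sum_nonneg fun i _ => (hℓ _ θ).1) hn'.le, ?_⟩
  rw [empRisk, div_le_iff₀ hn']
  refine (Finset.sum_le_card_nsmul _ _ C fun i _ => (hℓ _ θ).2).trans_eq ?_
  simp [mul_comm]

section BoundedLoss

variable {Z Θ : Type*} [MeasurableSpace Z] [MeasurableSpace Θ] {ℓ : Z → Θ → ℝ} {C : ℝ}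
  {P : Measure Z} {n : ℕ}

theorem measurable_risk [SFinite P] (hℓmeas : Measurable (Function.uncurry ℓ)) :
    Measurable (risk ℓ P) := by
  have h : StronglyMeasurable (Function.uncurry fun θ z => ℓ z θ) :=
    (hℓmeas.comp measurable_swap).stronglyMeasurable
  exact h.integral_prod_right.measurable

theorem measurable_uncurry_empRisk (hℓmeas : Measurable (Function.uncurry ℓ)) :
    Measurable (Function.uncurry fun (S : Fin n → Z) θ => empRisk ℓ S θ) := by
  refine (Finset.measurable_sum _ fun i _ => ?_).div_const _
  have h : Measurable fun x : (Fin n → Z) × Θ => (x.1 i, x.2) :=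
    ((measurable_pi_apply i).comp measurable_fst).prodMk measurable_snd
  exact hℓmeas.comp h

theorem integral_empRisk [IsProbabilityMeasure P] (hn : 0 < n)
    (hℓmeas : Measurable (Function.uncurry ℓ)) (hℓ : ∀ z θ, ℓ z θ ∈ Set.Icc 0 C) (θ : Θ) :
    ∫ S, empRisk ℓ S θ ∂(Measure.pi fun _ : Fin n => P) = risk ℓ P θ := by
  have hn' : (n : ℝ) ≠ 0 := by exact_mod_cast hn.ne'
  have hm : Measurable fun z => ℓ z θ := hℓmeas.comp measurable_prodMk_right
  simp only [empRisk]
  rw [integral_div, integral_finsetSum]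
  · have h (i : Fin n) : ∫ S, ℓ (S i) θ ∂(Measure.pi fun _ : Fin n => P) = risk ℓ P θ :=
      integral_comp_eval (μ := fun _ : Fin n => P) (f := fun z => ℓ z θ) hm.aestronglyMeasurable
    simp [h, hn']
  · intro i _
    refine .of_bound (hm.comp (measurable_pi_apply i)).aestronglyMeasurable C
      (Filter.Eventually.of_forall fun S => ?_)
    rw [Real.norm_eq_abs, abs_of_nonneg (hℓ _ _).1]
    exact (hℓ _ _).2

/-- Hoeffding's lemma for the deviation of the empirical risk. -/
theorem integral_exp_risk_sub_empRisk_le [IsProbabilityMeasure P] (hn : 0 < n)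
    (hℓmeas : Measurable (Function.uncurry ℓ)) (hℓ : ∀ z θ, ℓ z θ ∈ Set.Icc 0 C)
    (α : ℝ) (θ : Θ) :
    ∫ S, Real.exp (-(α * n) * empRisk ℓ S θ + α * n * risk ℓ P θ)
      ∂(Measure.pi fun _ : Fin n => P) ≤ Real.exp (α ^ 2 * C ^ 2 / 8 * n) := by
  have hn' : (n : ℝ) ≠ 0 := by exact_mod_cast hn.ne'
  have hm : Measurable fun z => ℓ z θ := hℓmeas.comp measurable_prodMk_right
  have hprod (S : Fin n → Z) : Real.exp (-(α * n) * empRisk ℓ S θ + α * n * risk ℓ P θ) =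
      ∏ i, Real.exp (-α * (ℓ (S i) θ - risk ℓ P θ)) := by
    rw [← Real.exp_sum, ← Finset.mul_sum, Finset.sum_sub_distrib, empRisk]
    congr 1
    simp only [Finset.sum_const, Finset.card_univ, Fintype.card_fin, nsmul_eq_mul]
    field_simp
    ring
  simp_rw [hprod]
  rw [integral_fintype_prod_eq_prod (μ := fun _ : Fin n => P)
    (fun _ z => Real.exp (-α * (ℓ z θ - risk ℓ P θ)))]
  have hmgf := (hasSubgaussianMGF_of_mem_Icc (μ := P) hm.aemeasurable
    (Filter.Eventually.of_forall fun z => hℓ z θ)).mgf_le (-α)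
  rw [Finset.prod_const, Finset.card_univ, Fintype.card_fin, mul_comm _ (n : ℝ), Real.exp_nat_mul]
  refine pow_le_pow_left₀ (integral_nonneg fun z => (Real.exp_pos _).le) ?_ n
  refine hmgf.trans_eq ?_
  congr 1
  simp only [sub_zero, NNReal.coe_pow, NNReal.coe_div, coe_nnnorm, NNReal.coe_ofNat,
    Real.norm_eq_abs, div_pow, sq_abs]
  ring

/-- PAC-Bayes bound in expectation for the Gibbs posterior, with the prior conditioned on an event
as comparison measure. -/
theorem integral_risk_gibbs_le [IsProbabilityMeasure P] {π : Measure Θ} [IsProbabilityMeasure π]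
    (hn : 0 < n) (hℓmeas : Measurable (Function.uncurry ℓ)) (hℓ : ∀ z θ, ℓ z θ ∈ Set.Icc 0 C)
    {α : ℝ} (hα : 0 < α) {B : Set Θ} (hB : 0 < π.real B) :
    ∫ S, ∫ θ, risk ℓ P θ ∂(gibbs ℓ π α S) ∂(Measure.pi fun _ : Fin n => P) ≤
      (∫ θ, risk ℓ P θ ∂π[|B]) - Real.log (π.real B) / (α * n) + α * C ^ 2 / 8 := by
  have hn' : (0 : ℝ) < n := by exact_mod_cast hn
  have hl : 0 < α * n := mul_pos hα hn'
  set l := α * n with hldef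
  set b := α ^ 2 * C ^ 2 / 8 * n with hb
  set Q := Measure.pi fun _ : Fin n => P
  have hπB : π B ≠ 0 := fun h => by simp [Measure.real, h] at hB
  have := cond_isProbabilityMeasure hπB
  have hR := risk_mem_Icc (P := P) hℓ
  have hE := empRisk_mem_Icc (n := n) hn hℓ
  have hRm : Measurable (risk ℓ P) := measurable_risk hℓmeas
  have hEm := measurable_uncurry_empRisk (n := n) hℓmeas
  have hEm' (S : Fin n → Z) : Measurable (empRisk ℓ S) := hEm.comp measurable_prodMk_left
  have hexp (S : Fin n → Z) : Integrable (fun θ => Real.exp (-l * empRisk ℓ S θ)) π := by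
    refine .of_bound ((hEm' S).const_mul _).exp.aestronglyMeasurable 1
      (Filter.Eventually.of_forall fun θ => ?_)
    rw [Real.norm_eq_abs, Real.abs_exp, Real.exp_le_one_iff]
    nlinarith [mul_nonneg hl.le (hE S θ).1]
  have hnorm (S : Fin n → Z) (θ : Θ) :
      ‖Real.exp (-l * empRisk ℓ S θ + l * risk ℓ P θ)‖ ≤ Real.exp (l * C) := by
    rw [Real.norm_eq_abs, Real.abs_exp, Real.exp_le_exp]
    nlinarith [mul_nonneg hl.le (hE S θ).1, mul_le_mul_of_nonneg_left (hR θ).2 hl.le]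
  have hGm : Measurable (Function.uncurry fun (S : Fin n → Z) θ =>
      Real.exp (-l * empRisk ℓ S θ + l * risk ℓ P θ)) :=
    ((hEm.const_mul _).add ((hRm.comp measurable_snd).const_mul _)).exp
  have hG : Integrable (Function.uncurry fun (S : Fin n → Z) θ =>
      Real.exp (-l * empRisk ℓ S θ + l * risk ℓ P θ)) (Q.prod π) :=
    .of_bound hGm.aestronglyMeasurable _ (Filter.Eventually.of_forall fun x => hnorm x.1 x.2)
  have hGS (S : Fin n → Z) :
      Integrable (fun θ => Real.exp (-l * empRisk ℓ S θ + l * risk ℓ P θ)) π :=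
    .of_bound (hGm.comp measurable_prodMk_left).aestronglyMeasurable _
      (Filter.Eventually.of_forall fun θ => hnorm S θ)
  have hEnorm (S : Fin n → Z) (θ : Θ) : ‖empRisk ℓ S θ‖ ≤ C := by
    rw [Real.norm_eq_abs, abs_of_nonneg (hE S θ).1]
    exact (hE S θ).2
  have hEint : Integrable (Function.uncurry fun (S : Fin n → Z) θ => empRisk ℓ S θ)
      (Q.prod π[|B]) :=
    .of_bound hEm.aestronglyMeasurable C (Filter.Eventually.of_forall fun x => hEnorm x.1 x.2)
  have hEπ (S : Fin n → Z) : Integrable (fun θ => -l * empRisk ℓ S θ) π :=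
    (Integrable.of_bound (hEm' S).aestronglyMeasurable C
      (Filter.Eventually.of_forall (hEnorm S))).const_mul _
  have hGe : ∫ S, ∫ θ, Real.exp (-l * empRisk ℓ S θ + l * risk ℓ P θ) ∂π ∂Q ≤ Real.exp b := by
    rw [integral_integral_swap hG]
    refine (integral_mono_of_nonneg (Filter.Eventually.of_forall fun θ =>
      integral_nonneg fun S => (Real.exp_pos _).le) (integrable_const (Real.exp b))
      (Filter.Eventually.of_forall fun θ =>
        integral_exp_risk_sub_empRisk_le hn hℓmeas hℓ α θ)).trans_eq ?_
    simp
  have hEe : ∫ S, ∫ θ, empRisk ℓ S θ ∂π[|B] ∂Q = ∫ θ, risk ℓ P θ ∂π[|B] := by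
    rw [integral_integral_swap hEint]
    exact integral_congr_ae (Filter.Eventually.of_forall fun θ =>
      integral_empRisk hn hℓmeas hℓ θ)
  have hpt (S : Fin n → Z) : ∫ θ, risk ℓ P θ ∂(gibbs ℓ π α S) ≤
      ((∫ θ, Real.exp (-l * empRisk ℓ S θ + l * risk ℓ P θ) ∂π) / Real.exp b / l
        + ∫ θ, empRisk ℓ S θ ∂π[|B]) + (b - 1 - Real.log (π.real B)) / l := by
    have hup : ∫ θ, l * risk ℓ P θ ∂(gibbs ℓ π α S) ≤
        Real.log (∫ θ, Real.exp (-l * empRisk ℓ S θ + l * risk ℓ P θ) ∂π) -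
          Real.log (∫ θ, Real.exp (-l * empRisk ℓ S θ) ∂π) := by
      refine integral_tilted_le_log_sub_log (K := l * C) (hexp S) (hRm.const_mul l)
        (fun θ => ?_) (hGS S)
      rw [abs_of_nonneg (mul_nonneg hl.le (hR θ).1)]
      exact mul_le_mul_of_nonneg_left (hR θ).2 hl.le
    have hlow := log_measure_add_integral_cond_le hB (hEπ S) (hexp S)
    have hpos := integral_exp_pos (hGS S)
    have hlog := Real.log_le_sub_one_of_pos (div_pos hpos (Real.exp_pos b))
    rw [Real.log_div hpos.ne' (Real.exp_pos b).ne', Real.log_exp] at hlog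
    rw [integral_const_mul] at hup hlow
    refine le_of_mul_le_mul_left ?_ hl
    have : l * (((∫ θ, Real.exp (-l * empRisk ℓ S θ + l * risk ℓ P θ) ∂π) / Real.exp b / l
        + ∫ θ, empRisk ℓ S θ ∂π[|B]) + (b - 1 - Real.log (π.real B)) / l) =
        (∫ θ, Real.exp (-l * empRisk ℓ S θ + l * risk ℓ P θ) ∂π) / Real.exp b
        + l * ∫ θ, empRisk ℓ S θ ∂π[|B] + (b - 1 - Real.log (π.real B)) := by
      field_simp
    linarith
  have hi₁ := (hG.integral_prod_left.div_const (Real.exp b)).div_const l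
  have hi₂ := hEint.integral_prod_left
  refine (integral_mono_of_nonneg (Filter.Eventually.of_forall fun S =>
    integral_nonneg fun θ => (hR θ).1) ((hi₁.add hi₂).add (integrable_const _))
    (Filter.Eventually.of_forall hpt)).trans ?_
  rw [integral_add' (hi₁.add hi₂) (integrable_const _), integral_add' hi₁ hi₂, integral_div,
    integral_div, integral_const, probReal_univ, one_smul]
  simp only [Function.uncurry]
  rw [hEe]
  have h1 : (∫ S, ∫ θ, Real.exp (-l * empRisk ℓ S θ + l * risk ℓ P θ) ∂π ∂Q) / Real.exp b / l
      ≤ 1 / l := by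
    gcongr
    exact (div_le_one (Real.exp_pos b)).2 hGe
  have h2 : 1 / l + (b - 1 - Real.log (π.real B)) / l =
      - Real.log (π.real B) / l + α * C ^ 2 / 8 := by
    rw [hb, hldef]
    field_simp
    ring
  have h3 : - Real.log (π.real B) / l = -(Real.log (π.real B) / l) := neg_div _ _
  linarith

end BoundedLoss

/-- Corollary 2 of the paper, third statement: without Bernstein's condition, the
Gibbs posterior with `α = 2√(2d)/(√n C)` achieves the slow rate
`(C/2)√(d/(2n)) ((1/2) log(8e⁴n/(dC²)) + (1/d) log κ)`. -/
theorem gibbs_slow_rate_of_prior_mass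
    {Z Θ : Type*} [MeasurableSpace Z] [MeasurableSpace Θ]
    (ℓ : Z → Θ → ℝ) (hℓmeas : Measurable (Function.uncurry ℓ))
    (C : ℝ) (hC : 0 < C) (hℓ : ∀ z θ, ℓ z θ ∈ Set.Icc 0 C)
    (P : Measure Z) [IsProbabilityMeasure P]
    (π : Measure Θ) [IsProbabilityMeasure π]
    (n : ℕ) (hn : 0 < n)
    (d κ : ℝ) (hd : 0 < d) (hκ : 1 ≤ κ) (hdn : C ^ 2 * d ≤ 8 * n)
    (hmass : ∀ s ∈ Set.Ioc (0 : ℝ) 1,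
      s ^ d / κ ≤ (π {θ | risk ℓ P θ - optRisk ℓ P ≤ s}).toReal)
    (α : ℝ) (hα : α = 2 * Real.sqrt (2 * d) / (Real.sqrt n * C)) :
    (∫ S, ∫ θ, risk ℓ P θ ∂(gibbs ℓ π α S) ∂(Measure.pi fun _ : Fin n => P)) ≤
      optRisk ℓ P + (C / 2) * Real.sqrt (d / (2 * n)) *
        ((1 / 2) * Real.log (8 * Real.exp 4 * n / (d * C ^ 2)) +
          (1 / d) * Real.log κ) := by
  have hn' : (0 : ℝ) < n := by exact_mod_cast hn
  have hαpos : 0 < α := by rw [hα]; positivity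
  have hl : 0 < α * n := mul_pos hαpos hn'
  have hsq : (α * n) ^ 2 * C ^ 2 = 8 * d * n := by
    rw [hα, mul_pow, div_pow, mul_pow, mul_pow, Real.sq_sqrt (by positivity),
      Real.sq_sqrt hn'.le]
    field_simp
    ring
  have hsq' : α ^ 2 * n * C ^ 2 = 8 * d :=
    mul_right_cancel₀ hn'.ne' (by linear_combination hsq)
  set s := d / (α * n) with hs
  have hspos : 0 < s := div_pos hd hl
  have hs1 : s ≤ 1 := by
    rw [hs, div_le_one hl]
    refine le_of_sq_le_sq ?_ hl.le
    refine le_of_mul_le_mul_right ?_ (pow_pos hC 2)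
    rw [hsq]
    nlinarith
  have hrate : C / 2 * Real.sqrt (d / (2 * n)) = s := by
    rw [← sq_eq_sq₀ (by positivity) hspos.le, mul_pow, Real.sq_sqrt (by positivity), hs, div_pow,
      div_pow]
    field_simp
    linear_combination hsq'
  have hα8 : α * C ^ 2 / 8 = s := by
    rw [hs, eq_div_iff hl.ne']
    linear_combination hsq' / 8
  have hlog : 1 / 2 * Real.log (8 * Real.exp 4 * n / (d * C ^ 2)) = 2 - Real.log s := by
    have : 8 * Real.exp 4 * n / (d * C ^ 2) = Real.exp 4 * s⁻¹ ^ 2 := by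
      rw [hs, inv_div, div_pow]
      field_simp
      linear_combination -hsq'
    rw [this, Real.log_mul (Real.exp_pos 4).ne' (by positivity), Real.log_exp, Real.log_pow,
      Real.log_inv]
    push_cast
    ring
  set B := {θ | risk ℓ P θ - optRisk ℓ P ≤ s} with hBdef
  have hBmeas : MeasurableSet B :=
    measurableSet_le ((measurable_risk hℓmeas).sub_const _) measurable_const
  have hmassB : s ^ d / κ ≤ π.real B := hmass s ⟨hspos, hs1⟩
  have hκ0 : 0 < κ := zero_lt_one.trans_le hκ
  have hmass0 : 0 < s ^ d / κ := div_pos (Real.rpow_pos_of_pos hspos d) hκ0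
  have hB := hmass0.trans_le hmassB
  have hlogB : d * Real.log s - Real.log κ ≤ Real.log (π.real B) := by
    rw [← Real.log_rpow hspos, ← Real.log_div (Real.rpow_pos_of_pos hspos d).ne' hκ0.ne']
    exact Real.log_le_log hmass0 hmassB
  have hπB : π B ≠ 0 := fun h => by simp [Measure.real, h] at hB
  have := cond_isProbabilityMeasure hπB
  have hcond : ∫ θ, risk ℓ P θ ∂π[|B] ≤ optRisk ℓ P + s := by
    refine (integral_mono_of_nonneg (Filter.Eventually.of_forall fun θ =>
      (risk_mem_Icc hℓ θ).1) (integrable_const (optRisk ℓ P + s)) ?_).trans_eq (by simp)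
    filter_upwards [ae_cond_mem hBmeas] with θ hθ
    have : risk ℓ P θ - optRisk ℓ P ≤ s := hθ
    linarith
  have hdiv : -(s * Real.log s - s * (1 / d * Real.log κ)) ≥
      -(Real.log (π.real B) / (α * n)) := by
    rw [ge_iff_le, neg_le_neg_iff, le_div_iff₀ hl]
    refine le_trans (le_of_eq ?_) hlogB
    rw [hs]
    field_simp
  refine (integral_risk_gibbs_le hn hℓmeas hℓ hαpos hB).trans ?_
  rw [hrate, hα8, hlog]
  linarith

end
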